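/- arXiv:2506.10572 — 4 statements merged into one kernel-verified Lean document; each statement's English description precedes it below -/
import Mathlib

section
/- Let τ > 0, x ∈ ℝ^K, and b ∈ U^K, and let y be a maximizer of F_{τ,x} over Δ^K ∩ {y : y_i ≤ b_i for all i}. Then there exists a nonnegative vector β ∈ ℝ^K, β_i ≥ 0 for all i, such that (1) y = Softmax_τ(x − β); (2) for every i with β_i > 0, y_i = b_i; and (3) setting r = Σ_{i : β_i = 0} exp(x_i/τ) and s = 1 − Σ_{i : β_i > 0} b_i, if s > 0 then for every i with β_i = 0, y_i = exp(x_i/τ)·s/r. -/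
/-- The probability simplex Δ^K. -/
def simplex (K : ℕ) : Set (Fin K → ℝ) :=
  {p | (∀ i, 0 ≤ p i) ∧ ∑ i, p i = 1}

/-- The entropic objective F_{τ,x}(y) = Σ x_i y_i − τ Σ y_i log y_i
(Real.log 0 = 0 gives the convention 0·log 0 = 0). -/
noncomputable def F {K : ℕ} (τ : ℝ) (x y : Fin K → ℝ) : ℝ :=
  ∑ i, x i * y i - τ * ∑ i, y i * Real.log (y i)

/-- Softmax_τ(x)_i = exp(x_i/τ) / Σ_k exp(x_k/τ). -/
noncomputable def softmax {K : ℕ} (τ : ℝ) (x : Fin K → ℝ) : Fin K → ℝ :=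
  fun i => Real.exp (x i / τ) / ∑ k, Real.exp (x k / τ)

/-!
Moving a small mass `ε` from coordinate `j` to an unsaturated coordinate `i` keeps `y` feasible, so
it cannot increase `F τ x`. By concavity of the entropy this compares the marginal gains at the
*displaced* points `y i + ε > 0` and `y j - ε > 0`, so the infinite slope of the entropy at `0`
causes no trouble, and `ε → 0` gives `y j / exp (x j / τ) ≤ y i / exp (x i / τ)`. Hence `y` is
positive, and the ratio `y i / exp (x i / τ)` is maximal at every unsaturated `i`. The shift
`β i` is `τ` times the logarithm of the maximal ratio over the `i`-th one.
-/

open Filter Topology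

theorem sum_sub_sum_eq_of_eq_off_pair {ι M : Type*} [Fintype ι] [AddCommGroup M] {f g : ι → M}
    {i j : ι} (hij : i ≠ j) (h : ∀ k, k ≠ i ∧ k ≠ j → f k = g k) :
    ∑ k, f k - ∑ k, g k = (f i - g i) + (f j - g j) := by
  rw [← Finset.sum_sub_distrib]
  exact Fintype.sum_eq_add i j hij fun k hk => sub_eq_zero.2 (h k hk)

theorem add_le_add_of_isMaxOn_sum {ι G M : Type*} [Fintype ι] [AddCommGroup G] [AddCommGroup M]
    [PartialOrder M] [IsOrderedAddMonoid M] {φ : ι → G → M} {S : ι → Set G} {y : ι → G}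
    (hy : ∀ k, y k ∈ S k)
    (hmax : IsMaxOn (fun z : ι → G => ∑ k, φ k (z k))
      {z | (∀ k, z k ∈ S k) ∧ ∑ k, z k = ∑ k, y k} y)
    {i j : ι} (hij : i ≠ j) {ε : G} (hi : y i + ε ∈ S i) (hj : y j - ε ∈ S j) :
    φ i (y i + ε) + φ j (y j - ε) ≤ φ i (y i) + φ j (y j) := by
  classical
  set z : ι → G := Function.update (Function.update y j (y j - ε)) i (y i + ε)
  have z_i : z i = y i + ε := Function.update_self ..
  have z_j : z j = y j - ε :=
    (Function.update_of_ne hij.symm ..).trans (Function.update_self ..)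
  have z_of_ne : ∀ k, k ≠ i ∧ k ≠ j → z k = y k := fun k hk =>
    (Function.update_of_ne hk.1 ..).trans (Function.update_of_ne hk.2 ..)
  have z_mem : ∀ k, z k ∈ S k := fun k => by
    by_cases hki : k = i
    · rwa [hki, z_i]
    by_cases hkj : k = j
    · rwa [hkj, z_j]
    rw [z_of_ne k ⟨hki, hkj⟩]
    exact hy k
  have z_sum : ∑ k, z k = ∑ k, y k := by
    rw [← sub_eq_zero, sum_sub_sum_eq_of_eq_off_pair hij z_of_ne, z_i, z_j]
    abel
  have z_le : ∑ k, φ k (z k) ≤ ∑ k, φ k (y k) := hmax ⟨z_mem, z_sum⟩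
  rw [← sub_nonpos, sum_sub_sum_eq_of_eq_off_pair hij fun k hk => by rw [z_of_ne k hk],
    z_i, z_j] at z_le
  rwa [← sub_nonpos, add_sub_add_comm]

theorem negMulLog_le_tangent {a c : ℝ} (ha : 0 ≤ a) (hc : 0 < c) :
    Real.negMulLog a ≤ Real.negMulLog c - (Real.log c + 1) * (a - c) := by
  rcases ha.eq_or_lt with rfl | ha
  · simp only [Real.negMulLog, Real.log_zero]
    linarith
  have hkl : 0 ≤ c * InformationTheory.klFun (a / c) :=
    mul_nonneg hc.le (InformationTheory.klFun_nonneg (by positivity))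
  have hkl_eq : c * InformationTheory.klFun (a / c) =
      a * Real.log a - a * Real.log c + c - a := by
    rw [InformationTheory.klFun_apply, Real.log_div ha.ne' hc.ne']
    field_simp
  simp only [Real.negMulLog]
  linarith

theorem div_exp_le_div_exp_of_exchange_le {τ u v p q ε : ℝ} (hτ : 0 < τ) (hε : 0 < ε)
    (hp : 0 ≤ p) (hq : ε < q)
    (h : (u * (p + ε) + τ * Real.negMulLog (p + ε)) + (v * (q - ε) + τ * Real.negMulLog (q - ε)) ≤
      (u * p + τ * Real.negMulLog p) + (v * q + τ * Real.negMulLog q)) :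
    (q - ε) / Real.exp (v / τ) ≤ (p + ε) / Real.exp (u / τ) := by
  have hp' : 0 < p + ε := by linarith
  have hq' : 0 < q - ε := by linarith
  have tangent_p := mul_le_mul_of_nonneg_left (negMulLog_le_tangent hp hp') hτ.le
  have tangent_q :=
    mul_le_mul_of_nonneg_left (negMulLog_le_tangent (hε.trans hq).le hq') hτ.le
  have marginal_le : u - τ * Real.log (p + ε) ≤ v - τ * Real.log (q - ε) :=
    le_of_mul_le_mul_left (by linarith) hε
  have log_le : Real.log (q - ε) - v / τ ≤ Real.log (p + ε) - u / τ := by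
    have := div_le_div_of_nonneg_right marginal_le hτ.le
    rw [sub_div, sub_div, mul_div_cancel_left₀ _ hτ.ne', mul_div_cancel_left₀ _ hτ.ne'] at this
    linarith
  simpa only [Real.exp_sub, Real.exp_log hp', Real.exp_log hq'] using Real.exp_le_exp.2 log_le

theorem softmax_add_const {K : ℕ} (τ : ℝ) (x : Fin K → ℝ) (c : ℝ) :
    softmax τ (fun i => x i + c) = softmax τ x := by
  funext i
  simp only [softmax, add_div, Real.exp_add, ← Finset.sum_mul]
  exact mul_div_mul_right _ _ (Real.exp_ne_zero _)

theorem softmax_mul_log {K : ℕ} {τ : ℝ} (hτ : τ ≠ 0) {y : Fin K → ℝ} (hpos : ∀ i, 0 < y i)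
    (hsum : ∑ i, y i = 1) : softmax τ (fun i => τ * Real.log (y i)) = y := by
  funext i
  simp only [softmax, mul_div_cancel_left₀ _ hτ, Real.exp_log (hpos _), hsum, div_one]

theorem sum_softmax {K : ℕ} [NeZero K] (τ : ℝ) (x : Fin K → ℝ) : ∑ i, softmax τ x i = 1 := by
  simp only [softmax, ← Finset.sum_div]
  exact div_self (Finset.sum_pos (fun i _ => Real.exp_pos _) Finset.univ_nonempty).ne'

theorem exists_eq_softmax_sub {K : ℕ} {τ : ℝ} (hτ : 0 < τ) (x : Fin K → ℝ) {y : Fin K → ℝ}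
    (hpos : ∀ i, 0 < y i) (hsum : ∑ i, y i = 1) :
    ∃ β : Fin K → ℝ, (∀ i, 0 ≤ β i) ∧ y = softmax τ (fun i => x i - β i) ∧
      ∀ i, 0 < β i → ∃ j, y i / Real.exp (x i / τ) < y j / Real.exp (x j / τ) := by
  have : Nonempty (Fin K) := not_isEmpty_iff.1 fun _ => by simp at hsum
  have ratio_pos (i : Fin K) : 0 < y i / Real.exp (x i / τ) := div_pos (hpos i) (Real.exp_pos _)
  have mul_log_ratio (i : Fin K) :
      τ * Real.log (y i / Real.exp (x i / τ)) = τ * Real.log (y i) - x i := by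
    rw [Real.log_div (hpos i).ne' (Real.exp_ne_zero _), Real.log_exp, mul_sub,
      mul_div_cancel₀ _ hτ.ne']
  obtain ⟨m, hm⟩ := Finite.exists_max fun i => y i / Real.exp (x i / τ)
  refine ⟨fun i => τ * Real.log (y m / Real.exp (x m / τ)) -
    τ * Real.log (y i / Real.exp (x i / τ)), fun i => ?_, ?_, fun i hi => ⟨m, ?_⟩⟩
  · exact sub_nonneg.2 (mul_le_mul_of_nonneg_left (Real.log_le_log (ratio_pos i) (hm i)) hτ.le)
  · calc y = softmax τ (fun i => τ * Real.log (y i)) := (softmax_mul_log hτ.ne' hpos hsum).symm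
      _ = softmax τ (fun i =>
            τ * Real.log (y i) + -(τ * Real.log (y m / Real.exp (x m / τ)))) :=
          (softmax_add_const τ _ _).symm
      _ = _ := by
          congr 1
          funext i
          simp only [mul_log_ratio]
          ring
  · exact (Real.log_lt_log_iff (ratio_pos i) (ratio_pos m)).1
      (lt_of_mul_lt_mul_left (sub_pos.1 hi) hτ.le)

theorem softmax_sub_apply_of_eq_zero {K : ℕ} {τ : ℝ} {x β b : Fin K → ℝ} (hβ : ∀ i, 0 ≤ β i)
    (hsat : ∀ i, 0 < β i → softmax τ (fun i => x i - β i) i = b i) {i : Fin K} (hi : β i = 0) :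
    softmax τ (fun i => x i - β i) i =
      Real.exp (x i / τ) * (1 - ∑ j ∈ Finset.univ.filter (fun j => 0 < β j), b j) /
        ∑ j ∈ Finset.univ.filter (fun j => β j = 0), Real.exp (x j / τ) := by
  have : NeZero K := ⟨i.pos.ne'⟩
  set Z := ∑ k, Real.exp ((x k - β k) / τ) with hZ
  set R := ∑ j ∈ Finset.univ.filter (fun j => β j = 0), Real.exp (x j / τ)
  have softmax_apply {j : Fin K} (hj : β j = 0) :
      softmax τ (fun i => x i - β i) j = Real.exp (x j / τ) / Z := by
    simp only [softmax, hj, sub_zero, hZ]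
  have R_pos : 0 < R :=
    Finset.sum_pos (fun _ _ => Real.exp_pos _) ⟨i, Finset.mem_filter.2 ⟨Finset.mem_univ i, hi⟩⟩
  have mass_saturated : ∑ j ∈ Finset.univ.filter (fun j => 0 < β j),
      softmax τ (fun i => x i - β i) j = ∑ j ∈ Finset.univ.filter (fun j => 0 < β j), b j :=
    Finset.sum_congr rfl fun j hj => hsat j (Finset.mem_filter.1 hj).2
  have mass_free : ∑ j ∈ Finset.univ.filter (fun j => ¬0 < β j),
      softmax τ (fun i => x i - β i) j = R / Z := by
    simp only [fun j => (hβ j).not_lt_iff_eq', R, Finset.sum_div]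
    exact Finset.sum_congr rfl fun j hj => softmax_apply (Finset.mem_filter.1 hj).2
  have remaining_mass : 1 - ∑ j ∈ Finset.univ.filter (fun j => 0 < β j), b j = R / Z := by
    rw [← sum_softmax τ fun i => x i - β i,
      ← Finset.sum_filter_add_sum_filter_not Finset.univ (fun j => 0 < β j),
      mass_saturated, mass_free, add_sub_cancel_left]
  rw [softmax_apply hi, remaining_mass]
  field_simp

/-- The simplex `Δ^K` truncated by the coordinatewise upper bounds `b`: the feasible set over which
the entropic objective is maximized. -/
def boundedSimplex {K : ℕ} (b : Fin K → ℝ) : Set (Fin K → ℝ) :=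
  {z | z ∈ simplex K ∧ ∀ i, z i ≤ b i}

theorem F_eq_sum_negMulLog {K : ℕ} (τ : ℝ) (x y : Fin K → ℝ) :
    F τ x y = ∑ i, (x i * y i + τ * Real.negMulLog (y i)) := by
  simp only [F, Real.negMulLog, Finset.sum_add_distrib, ← Finset.mul_sum, neg_mul,
    Finset.sum_neg_distrib, mul_neg, sub_eq_add_neg]

section Maximizer

variable {K : ℕ} {τ : ℝ} {x b y : Fin K → ℝ}

theorem exchange_le_of_isMaxOn_F (hy : y ∈ boundedSimplex b)
    (hmax : IsMaxOn (F τ x) (boundedSimplex b) y) {i j : Fin K} (hij : i ≠ j) {ε : ℝ}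
    (hε : 0 < ε) (hi : y i + ε ≤ b i) (hj : ε ≤ y j) :
    (x i * (y i + ε) + τ * Real.negMulLog (y i + ε)) +
        (x j * (y j - ε) + τ * Real.negMulLog (y j - ε)) ≤
      (x i * y i + τ * Real.negMulLog (y i)) + (x j * y j + τ * Real.negMulLog (y j)) := by
  obtain ⟨⟨hnonneg, hsum⟩, hle⟩ := hy
  refine add_le_add_of_isMaxOn_sum (φ := fun k t => x k * t + τ * Real.negMulLog t)
    (S := fun k => Set.Icc 0 (b k)) (fun k => ⟨hnonneg k, hle k⟩) (fun z hz => ?_) hij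
    ⟨by linarith [hnonneg i], hi⟩ ⟨by linarith, by linarith [hle j]⟩
  have hz' : z ∈ boundedSimplex b :=
    ⟨⟨fun k => (hz.1 k).1, hz.2.trans hsum⟩, fun k => (hz.1 k).2⟩
  simpa only [F_eq_sum_negMulLog] using hmax hz'

theorem div_exp_le_div_exp_of_isMaxOn_F (hτ : 0 < τ) (hy : y ∈ boundedSimplex b)
    (hmax : IsMaxOn (F τ x) (boundedSimplex b) y) {i : Fin K} (hi : y i < b i) (j : Fin K) :
    y j / Real.exp (x j / τ) ≤ y i / Real.exp (x i / τ) := by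
  obtain rfl | hij := eq_or_ne i j
  · rfl
  obtain hj | hj := (hy.1.1 j).eq_or_lt
  · rw [← hj, zero_div]
    exact div_nonneg (hy.1.1 i) (Real.exp_pos _).le
  have exchange : ∀ᶠ ε in 𝓝[>] (0 : ℝ),
      (y j - ε) / Real.exp (x j / τ) ≤ (y i + ε) / Real.exp (x i / τ) := by
    filter_upwards [Ioo_mem_nhdsGT (lt_min hj (sub_pos.2 hi))] with ε ⟨hε, hε_lt⟩
    obtain ⟨hεj, hεi⟩ := lt_min_iff.1 hε_lt
    exact div_exp_le_div_exp_of_exchange_le hτ hε (hy.1.1 i) hεj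
      (exchange_le_of_isMaxOn_F hy hmax hij hε (by linarith) hεj.le)
  have tendsto_of_continuous {f : ℝ → ℝ} (hf : Continuous f) : Tendsto f (𝓝[>] 0) (𝓝 (f 0)) :=
    hf.continuousAt.tendsto.mono_left nhdsWithin_le_nhds
  simpa only [sub_zero, add_zero] using le_of_tendsto_of_tendsto
    (tendsto_of_continuous (f := fun ε => (y j - ε) / Real.exp (x j / τ)) (by fun_prop))
    (tendsto_of_continuous (f := fun ε => (y i + ε) / Real.exp (x i / τ)) (by fun_prop)) exchange

theorem pos_of_isMaxOn_F (hτ : 0 < τ) (hy : y ∈ boundedSimplex b)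
    (hmax : IsMaxOn (F τ x) (boundedSimplex b) y) {i : Fin K} (hb : 0 < b i) : 0 < y i := by
  refine (hy.1.1 i).lt_of_ne' fun hi => ?_
  obtain ⟨j, -, hj⟩ : ∃ j ∈ Finset.univ, 0 < y j :=
    Finset.exists_lt_of_sum_lt (by simp [hy.1.2])
  have ratio_le := div_exp_le_div_exp_of_isMaxOn_F hτ hy hmax (hi ▸ hb) j
  rw [hi, zero_div] at ratio_le
  exact ratio_le.not_gt (div_pos hj (Real.exp_pos _))

end Maximizer

/-- a maximizer of F_{τ,x} over the upper-bounded simplex is a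
softmax of shifted logits x − β, with β ≥ 0, saturation where β_i > 0, and the
explicit normalization on the unsaturated coordinates. -/
theorem ubsoftmax_eq_shifted_softmax
    (K : ℕ) (hK : 1 ≤ K) (τ : ℝ) (hτ : 0 < τ) (x b : Fin K → ℝ)
    (hb : ∀ i, 0 < b i ∧ b i ≤ 1) (hbsum : 1 ≤ ∑ i, b i)
    (y : Fin K → ℝ)
    (hy : y ∈ simplex K ∧ ∀ i, y i ≤ b i)
    (hymax : ∀ z, (z ∈ simplex K ∧ ∀ i, z i ≤ b i) → F τ x z ≤ F τ x y) :
    ∃ β : Fin K → ℝ,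
      (∀ i, 0 ≤ β i) ∧
      y = softmax τ (fun i => x i - β i) ∧
      (∀ i, 0 < β i → y i = b i) ∧
      (0 < 1 - ∑ i ∈ Finset.univ.filter (fun i => 0 < β i), b i →
        ∀ i, β i = 0 →
          y i = Real.exp (x i / τ) *
              (1 - ∑ j ∈ Finset.univ.filter (fun j => 0 < β j), b j) /
            ∑ j ∈ Finset.univ.filter (fun j => β j = 0), Real.exp (x j / τ)) := by
  have hmax : IsMaxOn (F τ x) (boundedSimplex b) y := hymax
  obtain ⟨β, hβ, hy_eq, hratio⟩ :=
    exists_eq_softmax_sub hτ x (y := y) (fun i => pos_of_isMaxOn_F hτ hy hmax (hb i).1) hy.1.2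
  have hsat (i : Fin K) (hi : 0 < β i) : y i = b i := by
    obtain ⟨j, hj⟩ := hratio i hi
    by_contra hne
    exact hj.not_ge (div_exp_le_div_exp_of_isMaxOn_F hτ hy hmax ((hy.2 i).lt_of_ne hne) j)
  refine ⟨β, hβ, hy_eq, hsat, fun _ i hi => ?_⟩
  rw [hy_eq] at hsat ⊢
  exact softmax_sub_apply_of_eq_zero hβ hsat hi
end

section
/- Let τ > 0, x ∈ ℝ^K, and let a, b ∈ ℝ be scalars such that the constant vectors a·1_K and b·1_K form a feasible box constraint, i.e. 0 ≤ a < 1, K·a ≤ 1, 0 < b ≤ 1, K·b ≥ 1, and a ≤ b. Then there exist scalars c, C ∈ ℝ with c ≤ C such that the maximizer of F_{τ,x} over Δ^K ∩ {y : a ≤ y_i ≤ b for all i} equals Softmax_τ(clip(x,c,C)), where clip(x,c,C) ∈ ℝ^K is defined componentwise by clip(x,c,C)_i = max(c, min(x_i, C)). -/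
/-!
Let `l` be a Lagrange multiplier for the constraint `∑ i, y i = 1`. Coordinatewise stationarity
suggests the candidate obtained by clipping the Gibbs weight `exp ((x i - l) / τ)` to `[a i, b i]`.
By the intermediate value theorem, `l` can be chosen so that these weights have total mass one.
Strict convexity of `u ↦ u * log u`, together with the variational inequality for the projection
onto an interval, then shows that the candidate strictly beats every other feasible point.

When the bounds do not depend on `i`, clipping `exp ((x i - l) / τ)` to `[m, b]` amounts to clipping
the logit `x i` to `[l + τ * log m, l + τ * log b]`. The lower bound `a` may vanish, so its role is
played by the smallest weight `m`, which is positive.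
-/

lemma sub_lt_mul_log_sub_log {u z : ℝ} (hu : 0 ≤ u) (hz : 0 < z) (hne : u ≠ z) :
    u - z < u * (Real.log u - Real.log z) := by
  rcases hu.eq_or_lt with rfl | hu
  · simpa using hz
  · have hlog : Real.log z - Real.log u < z / u - 1 := by
      rw [← Real.log_div hz.ne' hu.ne']
      exact Real.log_lt_sub_one_of_pos (div_pos hz hu)
        fun h => hne ((div_eq_one_iff_eq hu.ne').1 h).symm
    have hmul := mul_lt_mul_of_pos_left hlog hu
    rw [mul_sub_one, mul_div_cancel₀ z hu.ne'] at hmul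
    linarith

lemma sub_clip_mul_sub_clip_nonpos_of_monotoneOn {f : ℝ → ℝ} {s : Set ℝ} (hf : MonotoneOn f s)
    {a b t u : ℝ} (ht : t ∈ s) (hclip : max a (min t b) ∈ s) (hau : a ≤ u) (hub : u ≤ b) :
    (f t - f (max a (min t b))) * (u - max a (min t b)) ≤ 0 := by
  have hab : a ≤ b := hau.trans hub
  rcases le_total t a with hta | hat
  · rw [min_eq_left (hta.trans hab), max_eq_left hta] at hclip ⊢
    exact mul_nonpos_of_nonpos_of_nonneg (sub_nonpos.2 (hf ht hclip hta)) (sub_nonneg.2 hau)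
  rcases le_total t b with htb | hbt
  · rw [min_eq_left htb, max_eq_right hat, sub_self, zero_mul]
  · rw [min_eq_right hbt, max_eq_right hab] at hclip ⊢
    exact mul_nonpos_of_nonneg_of_nonpos (sub_nonneg.2 (hf hclip ht hbt)) (sub_nonpos.2 hub)

/-- The Gibbs weight `exp ((t - l) / τ)` of a logit `t`, clipped to the interval `[a, b]`. The
parameter `l` is the Lagrange multiplier of the normalization constraint, up to the shift by `τ`
that comes from differentiating `τ * (u * log u)`. -/
noncomputable def clippedGibbs (τ l a b t : ℝ) : ℝ :=
  max a (min (Real.exp ((t - l) / τ)) b)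

section ClippedGibbs

variable {τ l a b t : ℝ}

lemma left_le_clippedGibbs : a ≤ clippedGibbs τ l a b t :=
  le_max_left _ _

lemma clippedGibbs_le_right (hab : a ≤ b) : clippedGibbs τ l a b t ≤ b :=
  max_le hab (min_le_right _ _)

lemma clippedGibbs_pos (hb : 0 < b) : 0 < clippedGibbs τ l a b t :=
  lt_max_of_lt_right (lt_min (Real.exp_pos _) hb)

lemma clippedGibbs_eq_of_left_le_of_le {m : ℝ} (ham : a ≤ m) (hm : m ≤ clippedGibbs τ l a b t) :
    clippedGibbs τ l a b t = clippedGibbs τ l m b t := by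
  rw [← max_eq_right hm, clippedGibbs, ← max_assoc, max_eq_left ham, clippedGibbs]

lemma clippedGibbs_le_of_sub_mul_log_le (hτ : 0 < τ) {p : ℝ} (hp : 0 < p) (hap : a ≤ p)
    (hl : t - τ * Real.log p ≤ l) : clippedGibbs τ l a b t ≤ p := by
  refine max_le hap ((min_le_left _ _).trans ?_)
  rw [← Real.le_log_iff_exp_le hp, div_le_iff₀' hτ]
  linarith

lemma le_clippedGibbs_of_le_sub_mul_log (hτ : 0 < τ) {p : ℝ} (hp : 0 < p) (hpb : p ≤ b)
    (hl : l ≤ t - τ * Real.log p) : p ≤ clippedGibbs τ l a b t := by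
  refine le_max_of_le_right (le_min ?_ hpb)
  rw [← Real.log_le_iff_le_exp hp, le_div_iff₀' hτ]
  linarith

lemma entropic_term_lt_clippedGibbs_term (hτ : 0 < τ) (hb : 0 < b) {u : ℝ} (hu : 0 ≤ u)
    (hau : a ≤ u) (hub : u ≤ b) (hne : u ≠ clippedGibbs τ l a b t) :
    t * u - τ * (u * Real.log u) <
      t * clippedGibbs τ l a b t
        - τ * (clippedGibbs τ l a b t * Real.log (clippedGibbs τ l a b t))
        + (l - τ) * (u - clippedGibbs τ l a b t) := by
  have hpos : 0 < clippedGibbs τ l a b t := clippedGibbs_pos hb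
  have hconvex := mul_lt_mul_of_pos_left (sub_lt_mul_log_sub_log hu hpos hne) hτ
  have hproj : ((t - l) / τ - Real.log (clippedGibbs τ l a b t)) *
      (u - clippedGibbs τ l a b t) ≤ 0 := by
    simpa only [Real.log_exp, clippedGibbs] using
      sub_clip_mul_sub_clip_nonpos_of_monotoneOn Real.strictMonoOn_log.monotoneOn
        (Real.exp_pos ((t - l) / τ)) hpos hau hub
  have hslope := mul_nonpos_of_nonneg_of_nonpos hτ.le hproj
  rw [← mul_assoc, mul_sub τ, mul_div_cancel₀ _ hτ.ne'] at hslope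
  linarith

end ClippedGibbs

lemma exists_sum_clippedGibbs_eq_sum {ι : Type*} [Fintype ι] {τ : ℝ} (hτ : 0 < τ)
    (x : ι → ℝ) {a b p : ι → ℝ} (hp : ∀ i, 0 < p i) (hap : ∀ i, a i ≤ p i) (hpb : ∀ i, p i ≤ b i) :
    ∃ l, ∑ i, clippedGibbs τ l (a i) (b i) (x i) = ∑ i, p i := by
  have hcont : Continuous fun l => ∑ i, clippedGibbs τ l (a i) (b i) (x i) := by
    unfold clippedGibbs
    fun_prop
  have hfin := Set.finite_range fun i => x i - τ * Real.log (p i)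
  obtain ⟨upper, hupper⟩ := hfin.bddAbove
  obtain ⟨lower, hlower⟩ := hfin.bddBelow
  refine mem_range_of_exists_le_of_exists_ge hcont ⟨upper, ?_⟩ ⟨lower, ?_⟩
  · exact Finset.sum_le_sum fun i _ =>
      clippedGibbs_le_of_sub_mul_log_le hτ (hp i) (hap i) (hupper ⟨i, rfl⟩)
  · exact Finset.sum_le_sum fun i _ =>
      le_clippedGibbs_of_le_sub_mul_log hτ (hp i) (hpb i) (hlower ⟨i, rfl⟩)

lemma F_eq_sum {K : ℕ} (τ : ℝ) (x y : Fin K → ℝ) :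
    F τ x y = ∑ i, (x i * y i - τ * (y i * Real.log (y i))) := by
  rw [F, Finset.mul_sum, Finset.sum_sub_distrib]

lemma F_lt_F_clippedGibbs {K : ℕ} {τ l : ℝ} (hτ : 0 < τ) {x a b y : Fin K → ℝ}
    (hb : ∀ i, 0 < b i) (hy : ∀ i, 0 ≤ y i) (hay : ∀ i, a i ≤ y i) (hyb : ∀ i, y i ≤ b i)
    (hsum : ∑ i, y i = ∑ i, clippedGibbs τ l (a i) (b i) (x i))
    (hne : y ≠ fun i => clippedGibbs τ l (a i) (b i) (x i)) :
    F τ x y < F τ x fun i => clippedGibbs τ l (a i) (b i) (x i) := by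
  set z : Fin K → ℝ := fun i => clippedGibbs τ l (a i) (b i) (x i)
  have hterm : ∀ i, y i ≠ z i → x i * y i - τ * (y i * Real.log (y i)) <
      x i * z i - τ * (z i * Real.log (z i)) + (l - τ) * (y i - z i) := fun i =>
    entropic_term_lt_clippedGibbs_term hτ (hb i) (hy i) (hay i) (hyb i)
  obtain ⟨j, hj⟩ := Function.ne_iff.1 hne
  calc
    F τ x y = ∑ i, (x i * y i - τ * (y i * Real.log (y i))) := F_eq_sum τ x y
    _ < ∑ i, (x i * z i - τ * (z i * Real.log (z i)) + (l - τ) * (y i - z i)) := by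
      refine Finset.sum_lt_sum (fun i _ => ?_) ⟨j, Finset.mem_univ j, hterm j hj⟩
      rcases eq_or_ne (y i) (z i) with hi | hi
      · simp [hi]
      · exact (hterm i hi).le
    _ = F τ x z := by
      rw [Finset.sum_add_distrib, ← Finset.mul_sum, Finset.sum_sub_distrib y z, hsum, sub_self,
        mul_zero, add_zero, F_eq_sum]

lemma softmax_eq_of_exp_eq_const_mul {K : ℕ} {τ r : ℝ} (hr : r ≠ 0) {w z : Fin K → ℝ}
    (hw : ∀ i, Real.exp (w i / τ) = r * z i) (hz : ∑ i, z i = 1) : softmax τ w = z := by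
  funext i
  simp only [softmax, hw]
  rw [← Finset.mul_sum, hz, mul_one, mul_div_cancel_left₀ _ hr]

lemma exp_clip_div_eq_mul_clippedGibbs {τ : ℝ} (hτ : 0 < τ) {m b : ℝ} (hm : 0 < m) (hb : 0 < b)
    (l t : ℝ) :
    Real.exp (max (l + τ * Real.log m) (min t (l + τ * Real.log b)) / τ) =
      Real.exp (l / τ) * clippedGibbs τ l m b t := by
  have hmono : Monotone fun s : ℝ => Real.exp (s / τ) := fun _ _ hst =>
    Real.exp_le_exp.2 (div_le_div_of_nonneg_right hst hτ.le)
  have hexp_bound {c : ℝ} (hc : 0 < c) :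
      Real.exp ((l + τ * Real.log c) / τ) = Real.exp (l / τ) * c := by
    rw [add_div, mul_div_cancel_left₀ _ hτ.ne', Real.exp_add, Real.exp_log hc]
  have hexp_logit : Real.exp (t / τ) = Real.exp (l / τ) * Real.exp ((t - l) / τ) := by
    rw [← Real.exp_add, ← add_div, add_sub_cancel]
  rw [hmono.map_max, hmono.map_min, hexp_bound hm, hexp_bound hb, hexp_logit,
    ← mul_min_of_nonneg _ _ (Real.exp_nonneg _), ← mul_max_of_nonneg _ _ (Real.exp_nonneg _),
    clippedGibbs]

lemma exists_clippedGibbs_eq_softmax_clip {K : ℕ} [NeZero K] {τ l a b : ℝ} (hτ : 0 < τ)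
    (hb : 0 < b) (hab : a ≤ b) {x : Fin K → ℝ} (hsum : ∑ i, clippedGibbs τ l a b (x i) = 1) :
    ∃ c C : ℝ, c ≤ C ∧
      (fun i => clippedGibbs τ l a b (x i)) = softmax τ (fun i => max c (min (x i) C)) := by
  obtain ⟨j, hj⟩ := Finite.exists_min fun i => clippedGibbs τ l a b (x i)
  set m := clippedGibbs τ l a b (x j)
  have hm : 0 < m := clippedGibbs_pos hb
  have hmb : m ≤ b := clippedGibbs_le_right hab
  refine ⟨l + τ * Real.log m, l + τ * Real.log b, by gcongr, ?_⟩
  refine (softmax_eq_of_exp_eq_const_mul (Real.exp_ne_zero (l / τ)) (fun i => ?_) hsum).symm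
  rw [clippedGibbs_eq_of_left_le_of_le left_le_clippedGibbs (hj i)]
  exact exp_clip_div_eq_mul_clippedGibbs hτ hm hb l (x i)

/-- for scalar box bounds a·1_K, b·1_K, the box-constrained
maximizer is a softmax of clipped logits: ∃ c ≤ C with
BCSoftmax_τ(x,(a·1,b·1)) = Softmax_τ(clip(x,c,C)). -/
theorem bcsoftmax_scalar_bounds_eq_softmax_clip
    (K : ℕ) (hK : 1 ≤ K) (τ : ℝ) (hτ : 0 < τ) (x : Fin K → ℝ)
    (a b : ℝ)
    (ha0 : 0 ≤ a) (ha1 : a < 1) (haK : (K : ℝ) * a ≤ 1)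
    (hb0 : 0 < b) (hb1 : b ≤ 1) (hbK : 1 ≤ (K : ℝ) * b)
    (hab : a ≤ b)
    (y : Fin K → ℝ)
    (hy : y ∈ simplex K ∧ ∀ i, a ≤ y i ∧ y i ≤ b)
    (hymax : ∀ z, (z ∈ simplex K ∧ ∀ i, a ≤ z i ∧ z i ≤ b) → F τ x z ≤ F τ x y) :
    ∃ c C : ℝ, c ≤ C ∧ y = softmax τ (fun i => max c (min (x i) C)) := by
  have : NeZero K := ⟨Nat.one_le_iff_ne_zero.1 hK⟩
  have hKpos : (0 : ℝ) < K := Nat.cast_pos.2 hK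
  have hsum_uniform : ∑ _i : Fin K, (1 / K : ℝ) = 1 := by simp [hKpos.ne']
  obtain ⟨l, hl⟩ := exists_sum_clippedGibbs_eq_sum hτ x
    (fun _ => one_div_pos.2 hKpos) (fun _ => (le_div_iff₀' hKpos).2 haK)
    (fun _ => (div_le_iff₀' hKpos).2 hbK)
  rw [hsum_uniform] at hl
  have hFle := hymax (fun i => clippedGibbs τ l a b (x i))
    ⟨⟨fun _ => (clippedGibbs_pos hb0).le, hl⟩,
      fun _ => ⟨left_le_clippedGibbs, clippedGibbs_le_right hab⟩⟩
  have hy_eq : y = fun i => clippedGibbs τ l a b (x i) := by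
    by_contra hne
    exact hFle.not_gt (F_lt_F_clippedGibbs hτ (fun _ => hb0) hy.1.1 (fun i => (hy.2 i).1)
      (fun i => (hy.2 i).2) (hy.1.2.trans hl.symm) hne)
  rw [hy_eq]
  exact exists_clippedGibbs_eq_softmax_clip hτ hb0 hab hl
end

section
/- Let τ > 0, x ∈ ℝ^K, and let a, b ∈ ℝ be scalars with 0 ≤ a < 1/K and 1/K < b ≤ 1. Let q be the maximizer of F_{τ,x} over Δ^K ∩ {y : a ≤ y_i ≤ b for all i}. Then every index attaining the maximum of Softmax_τ(x) also attains the maximum of q; that is, {i : x_i = max_j x_j} ⊆ {i : q_i = max_j q_j}. Moreover, for all indices i, j, x_i ≤ x_j implies q_i ≤ q_j. -/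
/-!
If `x i ≤ x j` but `q j < q i`, exchanging the coordinates `i` and `j` of `q` changes the objective
by `(x j - x i) * (q i - q j) ≥ 0`, since the entropy term is symmetric. The exchanged vector is
again feasible, hence a second maximizer, which contradicts strict concavity.
-/

section StrictConcave

variable {𝕜 β : Type*} [AddCommMonoid β] [PartialOrder β]

theorem strictConcaveOn_const_smul {E : Type*} [CommSemiring 𝕜] [PartialOrder 𝕜] [AddCommMonoid E]
    [SMul 𝕜 E] [Module 𝕜 β] [PosSMulStrictMono 𝕜 β] {s : Set E} {f : E → β} {c : 𝕜} (hc : 0 < c)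
    (hf : StrictConcaveOn 𝕜 s f) : StrictConcaveOn 𝕜 s (fun y => c • f y) := by
  refine ⟨hf.1, fun y hy z hz hyz a b ha hb hab => ?_⟩
  calc a • c • f y + b • c • f z = c • (a • f y + b • f z) := by
        rw [smul_add, smul_comm c, smul_comm c]
    _ < c • f (a • y + b • z) := smul_lt_smul_of_pos_left (hf.2 hy hz hyz ha hb hab) hc

theorem strictConcaveOn_pi_sum {ι : Type*} [Fintype ι] [Semiring 𝕜] [PartialOrder 𝕜]
    [IsOrderedCancelAddMonoid β] [Module 𝕜 β] {E : ι → Type*} [∀ i, AddCommMonoid (E i)]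
    [∀ i, Module 𝕜 (E i)] {s : ∀ i, Set (E i)} {f : ∀ i, E i → β}
    (hf : ∀ i, StrictConcaveOn 𝕜 (s i) (f i)) :
    StrictConcaveOn 𝕜 (Set.univ.pi s) (fun y => ∑ i, f i (y i)) := by
  refine ⟨convex_pi fun i _ => (hf i).1, fun y hy z hz hyz a b ha hb hab => ?_⟩
  simp only [Finset.smul_sum, ← Finset.sum_add_distrib]
  obtain ⟨k, hk⟩ := Function.ne_iff.1 hyz
  refine Finset.sum_lt_sum (fun i _ => ?_) ⟨k, Finset.mem_univ k, ?_⟩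
  · exact (hf i).concaveOn.2 (hy i trivial) (hz i trivial) ha.le hb.le hab
  · exact (hf k).2 (hy k trivial) (hz k trivial) hk ha hb hab

end StrictConcave

section SwapInvariant

variable {ι : Type*} [Fintype ι] [DecidableEq ι]

theorem dotProduct_comp_swap {R : Type*} [NonUnitalNonAssocRing R] (x y : ι → R) (i j : ι) :
    x ⬝ᵥ (y ∘ Equiv.swap i j) = x ⬝ᵥ y + (x j - x i) * (y i - y j) := by
  have comp_swap_eq : y ∘ Equiv.swap i j =
      y + (Pi.single j (y i - y j) - Pi.single i (y i - y j)) := by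
    ext k
    simp only [Function.comp_apply, Equiv.swap_apply_def, Pi.add_apply, Pi.sub_apply,
      Pi.single_apply]
    split_ifs <;> simp_all
  rw [comp_swap_eq, dotProduct_add, dotProduct_sub, dotProduct_single, dotProduct_single, sub_mul]

theorem le_of_isMaxOn_dotProduct_add {𝕜 : Type*} [Field 𝕜] [LinearOrder 𝕜] [IsStrictOrderedRing 𝕜]
    {S : Set (ι → 𝕜)} {g : (ι → 𝕜) → 𝕜} {x q : ι → 𝕜} {i j : ι} (hg : StrictConcaveOn 𝕜 S g)
    (hS_swap : ∀ y ∈ S, y ∘ Equiv.swap i j ∈ S) (hg_swap : ∀ y ∈ S, g (y ∘ Equiv.swap i j) = g y)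
    (hq : q ∈ S) (hmax : IsMaxOn (fun y => x ⬝ᵥ y + g y) S q) (hx : x i ≤ x j) : q i ≤ q j := by
  by_contra! hlt
  have le_swap : x ⬝ᵥ q + g q ≤ x ⬝ᵥ (q ∘ Equiv.swap i j) + g (q ∘ Equiv.swap i j) := by
    rw [hg_swap q hq, dotProduct_comp_swap]
    gcongr
    exact le_add_of_nonneg_right (mul_nonneg (sub_nonneg.2 hx) (sub_nonneg.2 hlt.le))
  have swap_max : IsMaxOn (fun y => x ⬝ᵥ y + g y) S (q ∘ Equiv.swap i j) :=
    fun y hy => (hmax hy).trans le_swap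
  have objective_concave : StrictConcaveOn 𝕜 S (fun y => x ⬝ᵥ y + g y) :=
    ((dotProductBilin 𝕜 𝕜 x).concaveOn hg.1).add_strictConcaveOn hg
  have q_eq_swap : q = q ∘ Equiv.swap i j :=
    objective_concave.eq_of_isMaxOn hmax swap_max hq (hS_swap q hq)
  have : q j = q i := by simpa using congrFun q_eq_swap j
  exact hlt.ne this

end SwapInvariant

theorem F_eq_dotProduct_add {K : ℕ} (τ : ℝ) (x y : Fin K → ℝ) :
    F τ x y = x ⬝ᵥ y + τ • ∑ i, Real.negMulLog (y i) := by
  simp only [F, dotProduct, Real.negMulLog, neg_mul, Finset.sum_neg_distrib, smul_eq_mul,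
    mul_neg, sub_eq_add_neg]

theorem strictConcaveOn_sum_negMulLog {ι : Type*} [Fintype ι] :
    StrictConcaveOn ℝ (Set.Ici (0 : ι → ℝ)) (fun y => ∑ i, Real.negMulLog (y i)) := by
  rw [← Set.pi_univ_Ici]
  exact strictConcaveOn_pi_sum fun _ => Real.strictConcaveOn_negMulLog

/-- The constraint set of the softmax with scalar bounds: probability vectors whose coordinates all
lie in `[a, b]`. -/
def boxSimplex (K : ℕ) (a b : ℝ) : Set (Fin K → ℝ) :=
  {z | z ∈ simplex K ∧ ∀ i, a ≤ z i ∧ z i ≤ b}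

section BoxSimplex

variable {K : ℕ} {a b : ℝ}

theorem convex_boxSimplex : Convex ℝ (boxSimplex K a b) := by
  have eq_inter : boxSimplex K a b =
      stdSimplex ℝ (Fin K) ∩ Set.Icc (fun _ => a) (fun _ => b) := by
    ext z
    simp [boxSimplex, simplex, stdSimplex, Pi.le_def, forall_and]
  rw [eq_inter]
  exact (convex_stdSimplex ℝ (Fin K)).inter (convex_Icc _ _)

theorem comp_perm_mem_boxSimplex {z : Fin K → ℝ} (hz : z ∈ boxSimplex K a b)
    (σ : Equiv.Perm (Fin K)) : z ∘ σ ∈ boxSimplex K a b :=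
  ⟨⟨fun i => hz.1.1 (σ i), (Equiv.sum_comp σ z).trans hz.1.2⟩, fun i => hz.2 (σ i)⟩

end BoxSimplex

theorem bcsoftmax_scalar_bounds_preserves_argmax_general {K : ℕ} {τ : ℝ} (hτ : 0 < τ)
    {x q : Fin K → ℝ} {S : Set (Fin K → ℝ)} (hS_convex : Convex ℝ S)
    (hS_nonneg : S ⊆ Set.Ici 0) (hS_swap : ∀ y ∈ S, ∀ i j, y ∘ Equiv.swap i j ∈ S)
    (hq : q ∈ S) (hmax : IsMaxOn (F τ x) S q) :
    (∀ i : Fin K, (∀ j, x j ≤ x i) → ∀ j, q j ≤ q i) ∧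
      ∀ i j : Fin K, x i ≤ x j → q i ≤ q j := by
  have entropy_concave : StrictConcaveOn ℝ S (fun y => τ • ∑ i, Real.negMulLog (y i)) :=
    strictConcaveOn_const_smul hτ (strictConcaveOn_sum_negMulLog.subset hS_nonneg hS_convex)
  have entropy_swap (i j : Fin K) (y : Fin K → ℝ) :
      τ • ∑ k, Real.negMulLog ((y ∘ Equiv.swap i j) k) = τ • ∑ k, Real.negMulLog (y k) :=
    congrArg (τ • ·) (Equiv.sum_comp (Equiv.swap i j) fun k => Real.negMulLog (y k))
  rw [funext (F_eq_dotProduct_add τ x)] at hmax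
  have monotone_in_logits (i j : Fin K) (hx : x i ≤ x j) : q i ≤ q j :=
    le_of_isMaxOn_dotProduct_add entropy_concave (fun y hy => hS_swap y hy i j)
      (fun y _ => entropy_swap i j y) hq hmax hx
  exact ⟨fun i hi j => monotone_in_logits j i (hi j), monotone_in_logits⟩

/-- for scalar bounds 0 ≤ a < 1/K and 1/K < b ≤ 1, the
box-constrained maximizer q preserves the argmax of x (every index maximizing
x maximizes q) and is monotone with respect to the logits. -/
theorem bcsoftmax_scalar_bounds_preserves_argmax
    (K : ℕ) (hK : 1 ≤ K) (τ : ℝ) (hτ : 0 < τ) (x : Fin K → ℝ)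
    (a b : ℝ)
    (ha0 : 0 ≤ a) (ha1 : a < 1 / (K : ℝ))
    (hb0 : 1 / (K : ℝ) < b) (hb1 : b ≤ 1)
    (q : Fin K → ℝ)
    (hq : q ∈ simplex K ∧ ∀ i, a ≤ q i ∧ q i ≤ b)
    (hqmax : ∀ z, (z ∈ simplex K ∧ ∀ i, a ≤ z i ∧ z i ≤ b) → F τ x z ≤ F τ x q) :
    (∀ i : Fin K, (∀ j, x j ≤ x i) → ∀ j, q j ≤ q i) ∧
      ∀ i j : Fin K, x i ≤ x j → q i ≤ q j :=
  bcsoftmax_scalar_bounds_preserves_argmax_general hτ convex_boxSimplex (fun _ hy => hy.1.1)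
    (fun _ hy i j => comp_perm_mem_boxSimplex hy (Equiv.swap i j)) hq (isMaxOn_iff.2 hqmax)
end

section
/- Let x ∈ ℝ^K and b ∈ U^K, let y be the maximizer of F_{1,x} over Δ^K ∩ {y : y_i ≤ b_i for all i}, and let V = {k ∈ {1,…,K} : y_k = b_k} be the set of indices saturated at their upper bounds. If i ∈ V and b_j/exp(x_j) ≤ b_i/exp(x_i), then j ∈ V. -/
/-!
Moving a small mass `t` from coordinate `i` to coordinate `j` changes the objective at the rate
`(x j - τ log (y j + t)) - (x i - τ log (y i - t))`, which is positive as long as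
`(y j + t) / exp (x j / τ) < (y i - t) / exp (x i / τ)`. Hence at a maximizer every coordinate `j`
with room below its upper bound has the largest ratio `y j / exp (x j / τ)`. If `i` is saturated
and `j` is not, then `b i / exp (x i / τ) ≤ y j / exp (x j / τ) < b j / exp (x j / τ)`.
-/

open Real Set Filter Topology

section Transfer

variable {ι G : Type*} [DecidableEq ι] [AddCommGroup G]

/-- The vector obtained from `y` by moving the mass `t` from coordinate `i` to coordinate `j`: the
perturbation that keeps the total mass. It is meant for `i ≠ j`; for `i = j` the mass `t` is
added without being removed. -/
def transfer (y : ι → G) (i j : ι) (t : G) : ι → G :=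
  Function.update (Function.update y i (y i - t)) j (y j + t)

variable {y : ι → G} {i j : ι} {t : G}

lemma transfer_source (hij : i ≠ j) : transfer y i j t i = y i - t := by
  simp [transfer, hij]

lemma transfer_target : transfer y i j t j = y j + t := by
  simp [transfer]

lemma transfer_of_ne {k : ι} (hki : k ≠ i) (hkj : k ≠ j) : transfer y i j t k = y k := by
  simp [transfer, hki, hkj]

lemma sum_transfer_sub_sum [Fintype ι] {M : Type*} [AddCommGroup M] (g : ι → G → M)
    (hij : i ≠ j) :
    ∑ k, g k (transfer y i j t k) - ∑ k, g k (y k) =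
      (g i (y i - t) - g i (y i)) + (g j (y j + t) - g j (y j)) := by
  rw [← Finset.sum_sub_distrib, Fintype.sum_eq_add i j hij, transfer_source hij, transfer_target]
  rintro k ⟨hki, hkj⟩
  rw [transfer_of_ne hki hkj, sub_self]

lemma sum_transfer [Fintype ι] (hij : i ≠ j) : ∑ k, transfer y i j t k = ∑ k, y k := by
  rw [← sub_eq_zero, sum_transfer_sub_sum (fun _ v => v) hij]
  abel

end Transfer

lemma transfer_mem_simplex_inter_Iic {K : ℕ} {b y : Fin K → ℝ} {i j : Fin K} {t : ℝ}
    (hy : y ∈ simplex K ∩ Iic b) (hij : i ≠ j) (ht : 0 ≤ t) (hti : t ≤ y i)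
    (htj : y j + t ≤ b j) : transfer y i j t ∈ simplex K ∩ Iic b := by
  obtain ⟨⟨hy_nonneg, hy_sum⟩, hy_le⟩ := hy
  have hbounds : ∀ k, 0 ≤ transfer y i j t k ∧ transfer y i j t k ≤ b k := by
    intro k
    obtain rfl | hki := eq_or_ne k i
    · rw [transfer_source hij]
      exact ⟨sub_nonneg.2 hti, (sub_le_self _ ht).trans (hy_le k)⟩
    obtain rfl | hkj := eq_or_ne k j
    · rw [transfer_target]
      exact ⟨add_nonneg (hy_nonneg k) ht, htj⟩
    · rw [transfer_of_ne hki hkj]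
      exact ⟨hy_nonneg k, hy_le k⟩
  exact ⟨⟨fun k => (hbounds k).1, (sum_transfer hij).trans hy_sum⟩, fun k => (hbounds k).2⟩

/-- The contribution `x v - τ v log v` of a single coordinate to the entropic objective. -/
noncomputable def entropicTerm (τ x v : ℝ) : ℝ :=
  x * v - τ * (v * log v)

lemma F_eq_sum_entropicTerm {K : ℕ} (τ : ℝ) (x y : Fin K → ℝ) :
    F τ x y = ∑ k, entropicTerm τ (x k) (y k) := by
  simp only [F, entropicTerm, Finset.sum_sub_distrib, Finset.mul_sum]

lemma mul_log_add_sub_le_mul_log {u v : ℝ} (hu : 0 < u) (hv : 0 ≤ v) :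
    v * log u + (v - u) ≤ v * log v := by
  obtain rfl | hv := hv.eq_or_lt
  · simpa using hu.le
  have hlog : log u - log v ≤ u / v - 1 := by
    rw [← log_div hu.ne' hv.ne']
    exact log_le_sub_one_of_pos (div_pos hu hv)
  have hmul : v * (log u - log v) ≤ u - v := by
    calc v * (log u - log v) ≤ v * (u / v - 1) := by gcongr
      _ = u - v := by field_simp
  linarith

lemma entropicTerm_le_tangent {τ u v : ℝ} (x : ℝ) (hτ : 0 ≤ τ) (hu : 0 < u) (hv : 0 ≤ v) :
    entropicTerm τ x v ≤ entropicTerm τ x u + (x - τ * log u - τ) * (v - u) := by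
  have h := mul_le_mul_of_nonneg_left (mul_log_add_sub_le_mul_log hu hv) hτ
  unfold entropicTerm
  linarith

lemma pos_of_div_lt_div {u v p q : ℝ} (hu : 0 ≤ u) (hp : 0 ≤ p) (hq : 0 < q)
    (h : u / p < v / q) : 0 < v :=
  (div_pos_iff_of_pos_right hq).1 ((div_nonneg hu hp).trans_lt h)

lemma sub_mul_log_lt_sub_mul_log {τ x x' u u' : ℝ} (hτ : 0 < τ) (hu : 0 < u)
    (h : u / exp (x / τ) < u' / exp (x' / τ)) : x' - τ * log u' < x - τ * log u := by
  have hu' : 0 < u' := pos_of_div_lt_div hu.le (exp_nonneg _) (exp_pos _) h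
  have hlog : log u - x / τ < log u' - x' / τ := by
    simpa only [log_div hu.ne' (exp_pos _).ne', log_div hu'.ne' (exp_pos _).ne', log_exp]
      using log_lt_log (by positivity) h
  calc x' - τ * log u' = -(τ * (log u' - x' / τ)) := by field_simp; ring
    _ < -(τ * (log u - x / τ)) := by gcongr
    _ = x - τ * log u := by field_simp; ring

-- Tangents are taken at the perturbed point, where both coordinates are positive even if `w = 0`.
lemma entropicTerm_add_lt_of_transfer {τ x x' v w t : ℝ} (hτ : 0 < τ) (hw : 0 ≤ w) (ht : 0 < t)
    (h : (w + t) / exp (x' / τ) < (v - t) / exp (x / τ)) :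
    entropicTerm τ x v + entropicTerm τ x' w <
      entropicTerm τ x (v - t) + entropicTerm τ x' (w + t) := by
  have hwt : 0 < w + t := by positivity
  have hvt : 0 < v - t := pos_of_div_lt_div hwt.le (exp_nonneg _) (exp_pos _) h
  have htangent_v := entropicTerm_le_tangent x hτ.le hvt (v := v) (by linarith)
  have htangent_w := entropicTerm_le_tangent x' hτ.le hwt hw
  have hgain := mul_lt_mul_of_pos_left (sub_mul_log_lt_sub_mul_log hτ hwt h) ht
  linarith

lemma exists_pos_le_add_div_lt_sub_div {v w c p q : ℝ} (hwc : w < c) (h : w / q < v / p) :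
    ∃ t > 0, w + t ≤ c ∧ (w + t) / q < (v - t) / p := by
  have hleft : Tendsto (fun t : ℝ => w + t) (𝓝[>] 0) (𝓝 w) :=
    (Continuous.tendsto' (by fun_prop) 0 w (by simp)).mono_left nhdsWithin_le_nhds
  have hright : Tendsto (fun t : ℝ => v - t) (𝓝[>] 0) (𝓝 v) :=
    (Continuous.tendsto' (by fun_prop) 0 v (by simp)).mono_left nhdsWithin_le_nhds
  exact (eventually_mem_nhdsWithin.and ((hleft.eventually_le_const hwc).and
    ((hleft.div_const q).eventually_lt (hright.div_const p) h))).exists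

section Maximizer

variable {K : ℕ} {τ : ℝ} {x b y : Fin K → ℝ} {i j : Fin K}

lemma F_lt_F_transfer {t : ℝ} (hτ : 0 < τ) (hij : i ≠ j) (hyj : 0 ≤ y j) (ht : 0 < t)
    (h : (y j + t) / exp (x j / τ) < (y i - t) / exp (x i / τ)) :
    F τ x y < F τ x (transfer y i j t) := by
  have hterms := entropicTerm_add_lt_of_transfer hτ hyj ht h
  have hsum := sum_transfer_sub_sum (y := y) (t := t) (fun k => entropicTerm τ (x k)) hij
  rw [F_eq_sum_entropicTerm, F_eq_sum_entropicTerm]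
  linarith

lemma div_exp_le_div_exp_of_isMaxOn (hτ : 0 < τ) (hy : y ∈ simplex K ∩ Iic b)
    (hmax : IsMaxOn (F τ x) (simplex K ∩ Iic b) y) (hj : y j < b j) :
    y i / exp (x i / τ) ≤ y j / exp (x j / τ) := by
  by_contra! hlt
  have hij : i ≠ j := by
    rintro rfl
    exact hlt.false
  have hyj : 0 ≤ y j := hy.1.1 j
  obtain ⟨t, ht, htj, hratio⟩ := exists_pos_le_add_div_lt_sub_div hj hlt
  have hti : 0 < y i - t :=
    pos_of_div_lt_div (add_nonneg hyj ht.le) (exp_nonneg _) (exp_pos _) hratio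
  have hmem := transfer_mem_simplex_inter_Iic hy hij ht.le (sub_pos.1 hti).le htj
  exact (F_lt_F_transfer hτ hij hyj ht hratio).not_ge (hmax hmem)

theorem ubsoftmax_saturation_monotone_general (hτ : 0 < τ) (hy : y ∈ simplex K ∩ Iic b)
    (hmax : IsMaxOn (F τ x) (simplex K ∩ Iic b) y) (hi : y i = b i)
    (hij : b j / exp (x j / τ) ≤ b i / exp (x i / τ)) : y j = b j := by
  refine (hy.2 j).eq_of_not_lt fun hj => lt_irrefl (b j / exp (x j / τ)) ?_
  calc b j / exp (x j / τ) ≤ b i / exp (x i / τ) := hij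
    _ = y i / exp (x i / τ) := by rw [hi]
    _ ≤ y j / exp (x j / τ) := div_exp_le_div_exp_of_isMaxOn hτ hy hmax hj
    _ < b j / exp (x j / τ) := by gcongr

end Maximizer

/-- for the maximizer y of F_{1,x} over the upper-bounded simplex,
if coordinate i is saturated (y_i = b_i) and b_j/exp(x_j) ≤ b_i/exp(x_i), then
coordinate j is saturated as well. -/
theorem ubsoftmax_saturation_monotone
    (K : ℕ) (hK : 1 ≤ K) (x b : Fin K → ℝ)
    (hb : ∀ i, 0 < b i ∧ b i ≤ 1) (hbsum : 1 ≤ ∑ i, b i)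
    (y : Fin K → ℝ)
    (hy : y ∈ simplex K ∧ ∀ i, y i ≤ b i)
    (hymax : ∀ z, (z ∈ simplex K ∧ ∀ i, z i ≤ b i) → F 1 x z ≤ F 1 x y)
    (i j : Fin K)
    (hi : y i = b i)
    (hij : b j / Real.exp (x j) ≤ b i / Real.exp (x i)) :
    y j = b j :=
  ubsoftmax_saturation_monotone_general one_pos hy hymax hi (by simpa only [div_one] using hij)
end
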